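/- arXiv:2105.05823 — 3 statements merged into one kernel-verified Lean document; each statement's English description precedes it below -/
import Mathlib

section
/- Let R be a commutative Noetherian ring in which every associated prime of R (viewed as a module over itself) is a minimal prime of R. Suppose that for every minimal prime P of R there exists a prime ideal Q of R with P ⊆ Q such that the localization of R at Q is a reduced ring. Then R is reduced. -/
/-- A Noetherian commutative ring all of whose associated primes are minimal, and such
that every minimal prime is contained in a prime at which the localization is reduced,
is itself reduced. -/
theorem stmt_3 (R : Type*) [CommRing R] [IsNoetherianRing R]
    (hass : ∀ P ∈ associatedPrimes R R, P ∈ minimalPrimes R)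
    (hloc : ∀ P ∈ minimalPrimes R, ∃ Q : PrimeSpectrum R, P ≤ Q.asIdeal ∧
      IsReduced (Localization.AtPrime Q.asIdeal)) :
    IsReduced R := by
  refine ⟨fun x hx => ?_⟩
  by_contra hne
  -- The annihilator of a nonzero nilpotent `x` lies in an associated prime `P ≤ Q`; but `x`
  -- vanishes in the reduced ring `R_Q`, so it is killed by some `s ∉ Q`.
  obtain ⟨P, hP, hle⟩ := exists_le_isAssociatedPrime_of_isNoetherianRing R x hne
  obtain ⟨Q, hPQ, hred⟩ := hloc P (hass P hP)
  have h0 : algebraMap R (Localization.AtPrime Q.asIdeal) x = 0 :=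
    (hx.map (algebraMap R (Localization.AtPrime Q.asIdeal))).eq_zero
  obtain ⟨s, hs⟩ := (IsLocalization.map_eq_zero_iff Q.asIdeal.primeCompl _ x).mp h0
  refine s.2 (hPQ (hle ?_))
  simpa [Submodule.mem_colon_singleton] using hs
end

section
/- Let p be a prime number, F a finite field of characteristic p, and W(F) the ring of p-typical Witt vectors of F. Fix natural numbers n ≥ 1 and s with s ≤ n, and positive integers e₁, …, e_s. In the multivariate power series ring A := W(F)[[X₁, …, Xₙ]], let I be the ideal generated by the s elements (1 + Xᵢ)^{p^{eᵢ}} − 1 for 1 ≤ i ≤ s. Then the Krull dimension of the quotient ring A/I equals n + 1 − s. -/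
/-!
Write `A = W(F)[[X₁, …, Xₙ]]`, a Noetherian local ring with maximal ideal `(p, X₁, …, Xₙ)`.

*Upper bound.* Modulo `p`, the generator `(1 + Xᵢ)^{p^{eᵢ}} - 1` becomes `Xᵢ^{p^{eᵢ}}`. Hence a prime
of `A` containing `I`, `p` and the remaining `n - s` variables contains every variable, so it is the
maximal ideal: the maximal ideal of `A/I` is minimal over an ideal generated by `n + 1 - s` elements
(`quotient_dim_le`), and Krull's height theorem bounds its height, which is the dimension.

*Lower bound.* Setting the first `s` variables to zero kills all generators of `I`, so `A/I`
surjects onto the power series ring over `W(F)` in the other `n - s` variables. Its dimension is at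
least `n - s + 1`, since each power series variable raises the dimension by at least one
(`le_dim_mvPowerSeries`).
-/

/-- The augmentation ideal of a power series ring in finitely many variables is generated by the
variables; this is what identifies the maximal ideal of `A` as `(p, X₁, …, Xₙ)`. -/
theorem mem_of_constantCoeff_eq_zero {R : Type*} [CommRing R] (n : ℕ)
    (Q : Ideal (MvPowerSeries (Fin n) R)) (hQ : ∀ i, MvPowerSeries.X i ∈ Q)
    (f : MvPowerSeries (Fin n) R) (hf : MvPowerSeries.constantCoeff f = 0) : f ∈ Q := by
  induction n with
  | zero =>
    have : f = 0 := by
      ext d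
      rw [Subsingleton.elim d 0]
      simpa using hf
    simp [this]
  | succ n ih =>
    let φ := MvPowerSeries.finSuccEquiv R n
    -- Split `φ f`, a power series in `X₀`, as `X₀ * h + C g` and apply induction to `g`.
    let g := PowerSeries.constantCoeff (φ f)
    have hg : φ.symm (PowerSeries.C g) ∈ Q := by
      refine ih (Q.comap ((φ.symm : _ →+* _).comp PowerSeries.C)) (fun i => ?_) g ?_
      · have h := MvPowerSeries.finSuccEquiv_X_succ (R := R) i
        have h2 : φ.symm (PowerSeries.C (MvPowerSeries.X i)) = MvPowerSeries.X i.succ := by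
          rw [← h]; exact φ.symm_apply_apply _
        simpa [h2] using hQ i.succ
      · have h := MvPowerSeries.coeff_coeff_finSuccEquiv (R := R) f (k := 0) (x := 0)
        have hc : (Finsupp.cons 0 0 : Fin (n + 1) →₀ ℕ) = 0 := by simp
        rw [hc] at h
        simpa [hf, g, φ] using h
    obtain ⟨h, hh⟩ : PowerSeries.X ∣ φ f - PowerSeries.C g := by
      rw [PowerSeries.X_dvd_iff]; simp [g]
    have hX : φ.symm PowerSeries.X = MvPowerSeries.X 0 := by
      rw [← MvPowerSeries.finSuccEquiv_X_zero]; exact φ.symm_apply_apply _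
    have hfe : f = MvPowerSeries.X 0 * φ.symm h + φ.symm (PowerSeries.C g) := by
      apply φ.injective
      rw [← hX, map_add, map_mul]
      simp only [AlgEquiv.apply_symm_apply]
      rw [← hh]; ring
    rw [hfe]
    exact Q.add_mem (Q.mul_mem_right _ (hQ 0)) hg

theorem le_dim_mvPowerSeries (R : Type*) [CommRing R] (m : ℕ) :
    ringKrullDim R + m ≤ ringKrullDim (MvPowerSeries (Fin m) R) := by
  induction m with
  | zero =>
    simpa using (ringKrullDim_eq_of_ringEquiv
      (MvPowerSeries.isEmptyEquiv (σ := Fin 0) (R := R)).toRingEquiv).ge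
  | succ m ih =>
    rw [ringKrullDim_eq_of_ringEquiv (MvPowerSeries.finSuccEquiv R m).toRingEquiv]
    refine le_trans ?_ ringKrullDim_succ_le_ringKrullDim_powerseries
    push_cast
    rw [← add_assoc]
    gcongr

/-- In characteristic `p` one has `(1 + x)^{p^k} - 1 = x^{p^k}`, so a prime containing `p` and
`(1 + x)^{p^k} - 1` contains `x`. -/
theorem mem_prime_of_pow_sub_one {A : Type*} [CommRing A] (p : ℕ) [Fact p.Prime] (Q : Ideal A)
    [Q.IsPrime] (hp : (p : A) ∈ Q) (x : A) (k : ℕ) (hx : (1 + x) ^ p ^ k - 1 ∈ Q) : x ∈ Q := by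
  have hp0 : ((p : ℕ) : A ⧸ Q) = 0 := by
    rw [← map_natCast (Ideal.Quotient.mk Q)]
    exact Ideal.Quotient.eq_zero_iff_mem.2 hp
  have : CharP (A ⧸ Q) p := (CharP.charP_iff_prime_eq_zero Fact.out).2 hp0
  rw [← Ideal.Quotient.eq_zero_iff_mem] at hx ⊢
  rw [map_sub, map_pow, map_add, map_one, add_pow_char_pow, one_pow, add_sub_cancel_left] at hx
  exact eq_zero_of_pow_eq_zero hx

/-- The upper bound: `p` and the last `n - s` variables generate an ideal of `A/I` over which the
maximal ideal is minimal. -/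
theorem quotient_dim_le (p : ℕ) [Fact p.Prime] (F : Type*) [Field F] [CharP F p] [PerfectRing F p]
    (n s : ℕ) (hs : s ≤ n) (e : Fin s → ℕ)
    (I : Ideal (MvPowerSeries (Fin n) (WittVector p F)))
    (hI : ∀ i : Fin s, (1 + MvPowerSeries.X (Fin.castLE hs i)) ^ (p ^ (e i)) - 1 ∈ I)
    (hI1 : I ≠ ⊤) :
    ringKrullDim (MvPowerSeries (Fin n) (WittVector p F) ⧸ I) ≤ (n + 1 - s : ℕ) := by
  classical
  have : Nontrivial (MvPowerSeries (Fin n) (WittVector p F) ⧸ I) :=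
    Ideal.Quotient.nontrivial_iff.2 hI1
  have : IsLocalRing (MvPowerSeries (Fin n) (WittVector p F) ⧸ I) :=
    .of_surjective' _ Ideal.Quotient.mk_surjective
  let B := MvPowerSeries (Fin n) (WittVector p F) ⧸ I
  let π : MvPowerSeries (Fin n) (WittVector p F) →+* B := Ideal.Quotient.mk I
  let S : Finset B := insert (p : B)
    (Finset.univ.image fun j : Fin (n - s) =>
      π (MvPowerSeries.X (Fin.cast (by omega) (Fin.natAdd s j))))
  have hcard : S.card ≤ n + 1 - s := by
    refine (Finset.card_insert_le _ _).trans ?_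
    have := Finset.card_image_le (s := (Finset.univ : Finset (Fin (n - s))))
      (f := fun j => π (MvPowerSeries.X (Fin.cast (by omega) (Fin.natAdd s j))))
    simp only [Finset.card_univ, Fintype.card_fin] at this
    omega
  have key : ∀ Q : Ideal B, Q.IsPrime → (S : Set B) ⊆ Q → IsLocalRing.maximalIdeal B ≤ Q := by
    intro Q hQ hSQ
    let P := Q.comap π
    have hP : P.IsPrime := Ideal.comap_isPrime π Q
    have hp : ((p : ℕ) : MvPowerSeries (Fin n) (WittVector p F)) ∈ P := by
      change π _ ∈ Q
      rw [map_natCast]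
      exact hSQ (by simp [S])
    have hX : ∀ i, MvPowerSeries.X i ∈ P := by
      intro i
      by_cases hi : i.1 < s
      · refine mem_prime_of_pow_sub_one p P hp _ (e ⟨i, hi⟩) ?_
        have h0 : π _ = 0 := Ideal.Quotient.eq_zero_iff_mem.2 (hI ⟨i, hi⟩)
        change π _ ∈ Q
        exact h0 ▸ Q.zero_mem
      · refine hSQ ?_
        simp only [S, Finset.coe_insert, Finset.coe_image, Finset.coe_univ, Set.image_univ]
        right
        refine ⟨⟨i.1 - s, by omega⟩, ?_⟩
        have hi' : Fin.cast (by omega) (Fin.natAdd s (⟨i.1 - s, by omega⟩ : Fin (n - s))) = i := by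
          ext
          simp
          omega
        exact congrArg (fun t => π (MvPowerSeries.X t)) hi'
    intro b hb
    obtain ⟨f, rfl⟩ := Ideal.Quotient.mk_surjective b
    have hfu : ¬ IsUnit (MvPowerSeries.constantCoeff f) := fun h =>
      hb ((MvPowerSeries.isUnit_iff_constantCoeff.2 h).map π)
    have hdvd : (p : WittVector p F) ∣ MvPowerSeries.constantCoeff f := by
      have h1 := (WittVector.irreducible p (k := F)).maximalIdeal_eq
      have h2 : MvPowerSeries.constantCoeff f ∈ IsLocalRing.maximalIdeal (WittVector p F) := hfu
      rwa [h1, Ideal.mem_span_singleton] at h2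
    obtain ⟨c, hc⟩ := hdvd
    have h1 : f - (p : MvPowerSeries (Fin n) (WittVector p F)) * MvPowerSeries.C c ∈ P :=
      mem_of_constantCoeff_eq_zero n P hX _ (by simp [hc])
    have h2 := P.add_mem h1 (P.mul_mem_right (MvPowerSeries.C c) hp)
    rwa [sub_add_cancel] at h2
  have hmin : IsLocalRing.maximalIdeal B ∈ (Ideal.span (S : Set B)).minimalPrimes := by
    refine ⟨⟨inferInstance, ?_⟩, fun Q hQ _ => key Q hQ.1 (Ideal.span_le.1 hQ.2)⟩
    have : IsLocalHom π := .of_surjective π Ideal.Quotient.mk_surjective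
    have hX : ∀ i, π (MvPowerSeries.X i) ∈ IsLocalRing.maximalIdeal B := fun i h => by
      have := MvPowerSeries.isUnit_iff_constantCoeff.1 (isUnit_of_map_unit π _ h)
      simp at this
    have hp : (p : B) ∈ IsLocalRing.maximalIdeal B := fun h => by
      rw [← map_natCast π] at h
      have := MvPowerSeries.isUnit_iff_constantCoeff.1 (isUnit_of_map_unit π _ h)
      rw [map_natCast] at this
      exact (WittVector.irreducible p (k := F)).not_isUnit this
    rw [Ideal.span_le]
    intro x hx
    simp only [S, Finset.coe_insert, Finset.coe_image, Finset.coe_univ, Set.image_univ] at hx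
    obtain rfl | ⟨j, rfl⟩ := hx
    · exact hp
    · exact hX _
  rw [← IsLocalRing.maximalIdeal_height_eq_ringKrullDim]
  have := Ideal.height_le_card_of_mem_minimalPrimes_span_finset hmin
  have h3 : (IsLocalRing.maximalIdeal B).height ≤ (n + 1 - s : ℕ) :=
    this.trans (by exact_mod_cast hcard)
  exact WithBot.coe_le_coe.2 h3

/-- The Krull dimension of `W(F)[[X₁,…,Xₙ]]/((1+Xᵢ)^{p^{eᵢ}} - 1 : 1 ≤ i ≤ s)`
is `n + 1 - s`. -/
theorem stmt_5 (p : ℕ) [Fact p.Prime] (F : Type*) [Field F] [Fintype F] [CharP F p]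
    (n s : ℕ) (hn : 1 ≤ n) (hs : s ≤ n) (e : Fin s → ℕ) (he : ∀ i, 1 ≤ e i)
    (I : Ideal (MvPowerSeries (Fin n) (WittVector p F)))
    (hI : I = Ideal.span
      (Set.range (fun i : Fin s =>
        (1 + MvPowerSeries.X (Fin.castLE hs i)) ^ (p ^ (e i)) - 1))) :
    ringKrullDim (MvPowerSeries (Fin n) (WittVector p F) ⧸ I) = (n + 1 - s : ℕ) := by
  let ι : Fin (n - s) ↪ Fin n :=
    (Fin.natAddEmb s).trans (finCongr (by omega : s + (n - s) = n)).toEmbedding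
  let κ := (MvPowerSeries.killCompl (R := WittVector p F) ι).toRingHom
  have hκ : I ≤ RingHom.ker κ := by
    rw [hI, Ideal.span_le]
    rintro _ ⟨i, rfl⟩
    have h0 : κ (MvPowerSeries.X (Fin.castLE hs i)) = 0 := by
      refine MvPowerSeries.killCompl_X_eq_zero ?_
      rintro ⟨j, hj⟩
      have := congrArg Fin.val hj
      simp [ι] at this
      omega
    simp [RingHom.mem_ker, h0]
  have hI1 : I ≠ ⊤ := fun h => RingHom.ker_ne_top κ (top_le_iff.1 (h ▸ hκ))
  refine le_antisymm (quotient_dim_le p F n s hs e I (fun i => ?_) hI1) ?_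
  · rw [hI]
    exact Ideal.subset_span ⟨i, rfl⟩
  · have hsurj : Function.Surjective (Ideal.Quotient.lift I κ hκ) :=
      Ideal.Quotient.lift_surjective_of_surjective _ _ fun g =>
        ⟨MvPowerSeries.rename ι g, MvPowerSeries.killCompl_rename_app g⟩
    refine le_trans ?_ (ringKrullDim_le_of_surjective _ hsurj)
    refine le_trans ?_ (le_dim_mvPowerSeries (WittVector p F) (n - s))
    rw [IsDiscreteValuationRing.ringKrullDim_eq_one]
    norm_cast
    omega
end

section
/- Let A be a commutative Noetherian local ring that is complete with respect to its maximal-ideal-adic topology, and let m ≥ 1 be an integer. Then the quotient ring A[[X]]/((1 + X)^m − 1) of the one-variable power series ring over A, regarded as an A-module via the composite A → A[[X]] → A[[X]]/((1+X)^m − 1), is finitely generated as an A-module. -/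
/-!
The coefficient of `X ^ m` in `(1 + X) ^ m - 1` is `1`, so the reduction of this series modulo the
maximal ideal is nonzero. By Weierstrass preparation it is a unit times a distinguished, hence
monic, polynomial `f`, and the quotient is isomorphic to `A[X] / (f)`, which is finite over `A`.
-/

/-- For a complete Noetherian local ring `A` and `m ≥ 1`, the quotient
`A[[X]]/((1+X)^m - 1)` is a finitely generated `A`-module. -/
theorem stmt_6 (A : Type*) [CommRing A] [IsNoetherianRing A] [IsLocalRing A]
    [IsAdicComplete (IsLocalRing.maximalIdeal A) A]
    (m : ℕ) (hm : 1 ≤ m) :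
    Module.Finite A
      (PowerSeries A ⧸ Ideal.span {(1 + PowerSeries.X : PowerSeries A) ^ m - 1}) := by
  have hcoeff : PowerSeries.coeff m ((1 + PowerSeries.X : PowerSeries A) ^ m - 1) = 1 := by
    have h : (1 + PowerSeries.X : PowerSeries A) ^ m
        = (((1 + Polynomial.X) ^ m : Polynomial A) : PowerSeries A) := by simp
    rw [map_sub, h, Polynomial.coeff_coe, Polynomial.coeff_one_add_X_pow, PowerSeries.coeff_one,
      if_neg (by lia)]
    simp
  have hg : ((1 + PowerSeries.X : PowerSeries A) ^ m - 1).map (IsLocalRing.residue A) ≠ 0 := by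
    intro h
    have h' := congrArg (PowerSeries.coeff m) h
    rw [PowerSeries.coeff_map, hcoeff] at h'
    simp at h'
  obtain ⟨f, u, hfu⟩ := PowerSeries.exists_isWeierstrassFactorization hg
  have : Module.Finite A (Polynomial A ⧸ Ideal.span {f}) :=
    hfu.isDistinguishedAt.monic.finite_quotient
  exact Module.Finite.equiv hfu.algEquivQuotient.toLinearEquiv
end
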